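/- With the same data as above (finite sets I, J, K; p : I × J → (0,1); q : I × K → (0,1); α ∈ (0,1); β, γ ∈ (0,1) with β + γ = 1; δ as defined; Ω the nonlinear feasible region; Ω_LA the linearly approximated feasible region): if Ω_LA is empty, then Ω is empty. Equivalently, if the linearly approximated problem has no feasible binary solution, then the original nonlinear problem has no feasible binary solution. -/

import Mathlib

open scoped BigOperators

/-- The nonlinear feasible region `Ω` of the GUTLCSCP: binary pairs `(y, z)` with
`(1 − ∏ j, p (i,j) ^ y j) * (1 − ∏ k, q (i,k) ^ z k) ≥ α` for all demand nodes `i`. -/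
def OmegaNL {I J K : Type*} [Fintype J] [Fintype K]
    (p : I × J → ℝ) (q : I × K → ℝ) (α : ℝ) :
    Set ((J → ℕ) × (K → ℕ)) :=
  {w | (∀ j, w.1 j = 0 ∨ w.1 j = 1) ∧ (∀ k, w.2 k = 0 ∨ w.2 k = 1) ∧
    ∀ i : I, (1 - ∏ j, p (i, j) ^ w.1 j) * (1 - ∏ k, q (i, k) ^ w.2 k) ≥ α}

/-- The linearly approximated feasible region `Ω_LA` of the GUTLCSCP-LA: binary pairs
`(y, z)` satisfying, for all demand nodes `i`, the three relaxed linear constraints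
with tangency point `δ`. -/
def OmegaLA {I J K : Type*} [Fintype J] [Fintype K]
    (p : I × J → ℝ) (q : I × K → ℝ) (α β γ δ : ℝ) :
    Set ((J → ℕ) × (K → ℕ)) :=
  {w | (∀ j, w.1 j = 0 ∨ w.1 j = 1) ∧ (∀ k, w.2 k = 0 ∨ w.2 k = 1) ∧
    ∀ i : I,
      (∑ j, (w.1 j : ℝ) * Real.log (p (i, j)) ≤ Real.log (1 - α)) ∧
      (∑ k, (w.2 k : ℝ) * Real.log (q (i, k)) ≤ Real.log (1 - α)) ∧
      (β * ∑ j, (w.1 j : ℝ) * Real.log (p (i, j)) +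
          γ * ∑ k, (w.2 k : ℝ) * Real.log (q (i, k)) ≤
        Real.log ((1 - α / (1 - δ)) ^ β * δ ^ γ))}

/-!
For a fixed demand node write `x` and `v` for the two products of failure probabilities. In these
variables the node constraint is `(1 - x) * (1 - v) ≥ α`, and the third linear constraint is the
tangent, in logarithmic coordinates, to the boundary curve `(1 - x) * (1 - v) = α` at the point
`(x₀, δ)`, `x₀ = 1 - α / (1 - δ)`, where `β log x + γ log v` is stationary along the curve.
Concavity of the logarithm reduces its validity to the supporting line of the hyperbola at
`(1 - x₀, 1 - δ)`, which is AM-GM. The stationarity condition is a quadratic equation in `δ`, of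
which the given `δ` is the root with `0 < δ < 1 - α`.
-/

section OrderedRing

variable {R : Type*} [CommRing R] [LinearOrder R] [IsStrictOrderedRing R]

theorem le_one_sub_of_le_one_sub_mul_one_sub {a x v : R} (hx : x ≤ 1) (hv : 0 ≤ v)
    (h : a ≤ (1 - x) * (1 - v)) : x ≤ 1 - a :=
  le_sub_comm.mp (h.trans (mul_le_of_le_one_right (sub_nonneg.mpr hx) (sub_le_self 1 hv)))

theorem two_mul_mul_le_add_of_mul_le_mul {a b a₀ b₀ : R} (ha : 0 ≤ a) (hb : 0 ≤ b)
    (ha₀ : 0 ≤ a₀) (hb₀ : 0 ≤ b₀) (h : a₀ * b₀ ≤ a * b) :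
    2 * (a₀ * b₀) ≤ a * b₀ + a₀ * b := by
  refine two_mul_le_add_of_sq_le_mul (mul_nonneg ha hb₀) (mul_nonneg ha₀ hb) ?_
  calc (a₀ * b₀) ^ 2 = (a₀ * b₀) * (a₀ * b₀) := sq _
    _ ≤ (a * b) * (a₀ * b₀) := mul_le_mul_of_nonneg_right h (mul_nonneg ha₀ hb₀)
    _ = (a * b₀) * (a₀ * b) := by ring

end OrderedRing

theorem sum_mul_log_eq_log_prod_pow {ι : Type*} {s : Finset ι} {f : ι → ℝ}
    (hf : ∀ i ∈ s, f i ≠ 0) (n : ι → ℕ) :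
    ∑ i ∈ s, (n i : ℝ) * Real.log (f i) = Real.log (∏ i ∈ s, f i ^ n i) := by
  simp only [Real.log_prod fun i hi => pow_ne_zero (n i) (hf i hi), Real.log_pow]

theorem prod_pow_mem_Ioc {ι : Type*} {s : Finset ι} {f : ι → ℝ}
    (hf : ∀ i ∈ s, f i ∈ Set.Ioc (0 : ℝ) 1) (n : ι → ℕ) :
    ∏ i ∈ s, f i ^ n i ∈ Set.Ioc (0 : ℝ) 1 :=
  ⟨Finset.prod_pos fun i hi => pow_pos (hf i hi).1 _,
    Finset.prod_le_one (fun i hi => pow_nonneg (hf i hi).1.le _)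
      fun i hi => pow_le_one₀ (hf i hi).1.le (hf i hi).2⟩

theorem mul_log_sub_log_le_sub {x x₀ : ℝ} (hx : 0 < x) (hx₀ : 0 < x₀) :
    x₀ * (Real.log x - Real.log x₀) ≤ x - x₀ := by
  rw [← Real.log_div hx.ne' hx₀.ne']
  calc x₀ * Real.log (x / x₀) ≤ x₀ * (x / x₀ - 1) :=
        mul_le_mul_of_nonneg_left (Real.log_le_sub_one_of_pos (div_pos hx hx₀)) hx₀.le
    _ = x - x₀ := by field_simp

-- The weights form a normal vector at `(x₀, v₀)`, in the coordinates `(log x, log v)`, to the level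
-- curve of `(1 - x) * (1 - v)`.
theorem weighted_log_le_of_one_sub_mul_one_sub_le {x v x₀ v₀ : ℝ} (hx : x ∈ Set.Ioc 0 1)
    (hv : v ∈ Set.Ioc 0 1) (hx₀ : x₀ ∈ Set.Ioc 0 1) (hv₀ : v₀ ∈ Set.Ioc 0 1)
    (h : (1 - x₀) * (1 - v₀) ≤ (1 - x) * (1 - v)) :
    x₀ * (1 - v₀) * Real.log x + v₀ * (1 - x₀) * Real.log v ≤
      x₀ * (1 - v₀) * Real.log x₀ + v₀ * (1 - x₀) * Real.log v₀ := by
  have hx₀' : 0 ≤ 1 - x₀ := sub_nonneg.mpr hx₀.2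
  have hv₀' : 0 ≤ 1 - v₀ := sub_nonneg.mpr hv₀.2
  have supporting_line : 2 * ((1 - x₀) * (1 - v₀)) ≤ (1 - x) * (1 - v₀) + (1 - x₀) * (1 - v) :=
    two_mul_mul_le_add_of_mul_le_mul (sub_nonneg.mpr hx.2) (sub_nonneg.mpr hv.2) hx₀' hv₀' h
  have log_x := mul_le_mul_of_nonneg_left (mul_log_sub_log_le_sub hx.1 hx₀.1) hv₀'
  have log_v := mul_le_mul_of_nonneg_left (mul_log_sub_log_le_sub hv.1 hv₀.1) hx₀'
  linarith

/-- The coordinate `δ` of the point `(1 - α / (1 - δ), δ)` of the curve `(1 - x) * (1 - v) = α` at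
which `β log x + γ log v` is stationary along the curve: the smaller root of
`γ (1 - δ - α) (1 - δ) = α β δ`, written out by the quadratic formula. -/
noncomputable def tangencyPoint (α β γ : ℝ) : ℝ :=
  (2 * γ + α * β - α * γ -
      Real.sqrt (α * (4 * β * γ + α * β ^ 2 + α * γ ^ 2 - 2 * α * β * γ))) / (2 * γ)

section TangencyPoint

variable {α β γ : ℝ}

theorem tangencyPoint_stationary (hα : 0 ≤ α) (hβ : 0 ≤ β) (hγ : 0 < γ) :
    γ * (1 - tangencyPoint α β γ - α) * (1 - tangencyPoint α β γ) =
      α * β * tangencyPoint α β γ := by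
  set E := α * (4 * β * γ + α * β ^ 2 + α * γ ^ 2 - 2 * α * β * γ) with hE
  have hE_nonneg : 0 ≤ E := by
    have : E = α ^ 2 * (β - γ) ^ 2 + 4 * (α * β * γ) := by rw [hE]; ring
    rw [this]
    positivity
  have hdiscrim : discrim γ (-(2 * γ + α * β - α * γ)) (γ * (1 - α)) = √E * √E := by
    rw [Real.mul_self_sqrt hE_nonneg, discrim, hE]
    ring
  have hroot := (quadratic_eq_zero_iff hγ.ne' hdiscrim (tangencyPoint α β γ)).mpr
    (Or.inr (by rw [neg_neg, tangencyPoint]))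
  linear_combination hroot

theorem tangencyPoint_pos (hα : 0 ≤ α) (hα' : α < 1) (hβ : 0 ≤ β) (hγ : 0 < γ) :
    0 < tangencyPoint α β γ := by
  have hαβ : 0 ≤ α * β := mul_nonneg hα hβ
  have hαγ : α * γ < γ := mul_lt_of_lt_one_left hγ hα'
  refine div_pos (sub_pos.mpr ((Real.sqrt_lt' (by linarith)).mpr ?_)) (by positivity)
  have : 0 < γ * (γ - α * γ) := mul_pos hγ (sub_pos.mpr hαγ)
  linear_combination 4 * this

theorem tangencyPoint_lt_one_sub (hα : 0 < α) (hα' : α < 1) (hβ : 0 < β) (hγ : 0 < γ) :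
    tangencyPoint α β γ < 1 - α := by
  have hsqrt : α * (β + γ) <
      √(α * (4 * β * γ + α * β ^ 2 + α * γ ^ 2 - 2 * α * β * γ)) := by
    apply Real.lt_sqrt_of_sq_lt
    have : 0 < α * (1 - α) * (β * γ) :=
      mul_pos (mul_pos hα (sub_pos.mpr hα')) (mul_pos hβ hγ)
    linear_combination 4 * this
  rw [tangencyPoint, div_lt_iff₀ (by positivity)]
  linarith

theorem mul_log_add_mul_log_le_log_tangencyPoint (hα : 0 < α) (hα' : α < 1) (hβ : 0 < β)
    (hγ : 0 < γ) {x v : ℝ} (hx : x ∈ Set.Ioc 0 1) (hv : v ∈ Set.Ioc 0 1)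
    (h : α ≤ (1 - x) * (1 - v)) :
    β * Real.log x + γ * Real.log v ≤
      Real.log ((1 - α / (1 - tangencyPoint α β γ)) ^ β * tangencyPoint α β γ ^ γ) := by
  have stationary := tangencyPoint_stationary hα.le hβ.le hγ
  have δ_pos := tangencyPoint_pos hα.le hα' hβ.le hγ
  have δ_lt := tangencyPoint_lt_one_sub hα hα' hβ hγ
  set δ := tangencyPoint α β γ
  have hδ : 0 < 1 - δ := by linarith
  have hδα : 0 < 1 - δ - α := by linarith
  set x₀ := 1 - α / (1 - δ) with hx₀_def
  have on_curve : (1 - x₀) * (1 - δ) = α := by rw [hx₀_def]; field_simp; ring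
  have hx₀ : x₀ ∈ Set.Ioc 0 1 :=
    ⟨sub_pos.mpr ((div_lt_one hδ).mpr (by linarith)), sub_le_self 1 (by positivity)⟩
  have tangent := weighted_log_le_of_one_sub_mul_one_sub_le hx hv hx₀
    ⟨δ_pos, by linarith⟩ (on_curve.trans_le h)
  have hβ_eq : β = β / (1 - δ - α) * (x₀ * (1 - δ)) := by
    rw [hx₀_def]; field_simp
  have hγ_eq : γ = β / (1 - δ - α) * (δ * (1 - x₀)) := by
    rw [hx₀_def]; field_simp; linarith
  rw [Real.log_mul (Real.rpow_pos_of_pos hx₀.1 β).ne' (Real.rpow_pos_of_pos δ_pos γ).ne',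
    Real.log_rpow hx₀.1, Real.log_rpow δ_pos]
  have scaled := mul_le_mul_of_nonneg_left tangent (div_pos hβ hδα).le
  simpa only [mul_add, ← mul_assoc, ← hβ_eq, ← hγ_eq] using scaled

end TangencyPoint

theorem la_infeasible_implies_infeasible_general
    {I J K : Type*} [Fintype J] [Fintype K] {p : I × J → ℝ} {q : I × K → ℝ}
    (hp : ∀ ij, p ij ∈ Set.Ioc (0 : ℝ) 1) (hq : ∀ ik, q ik ∈ Set.Ioc (0 : ℝ) 1)
    {α β γ : ℝ} (hα : α ∈ Set.Ioo (0 : ℝ) 1) (hβ : 0 < β) (hγ : 0 < γ) :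
    OmegaNL p q α ⊆ OmegaLA p q α β γ (tangencyPoint α β γ) := by
  rintro ⟨y, z⟩ ⟨hy, hz, hcover⟩
  refine ⟨hy, hz, fun i => ?_⟩
  have hx := prod_pow_mem_Ioc (s := Finset.univ) (fun j _ => hp (i, j)) y
  have hv := prod_pow_mem_Ioc (s := Finset.univ) (fun k _ => hq (i, k)) z
  have hxv := hcover i
  have hvx := hxv.le.trans_eq (mul_comm _ _)
  rw [sum_mul_log_eq_log_prod_pow fun j _ => (hp (i, j)).1.ne',
    sum_mul_log_eq_log_prod_pow fun k _ => (hq (i, k)).1.ne']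
  exact ⟨Real.log_le_log hx.1 (le_one_sub_of_le_one_sub_mul_one_sub hx.2 hv.1.le hxv),
    Real.log_le_log hv.1 (le_one_sub_of_le_one_sub_mul_one_sub hv.2 hx.1.le hvx),
    mul_log_add_mul_log_le_log_tangencyPoint hα.1 hα.2 hβ hγ hx hv hxv⟩

/-- Proposition 2: if the linearly approximated feasible region `Ω_LA` is empty, then
the original nonlinear feasible region `Ω` is empty as well. -/
theorem la_infeasible_implies_infeasible
    {I J K : Type*} [Fintype I] [Fintype J] [Fintype K]
    (p : I × J → ℝ) (q : I × K → ℝ)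
    (hp : ∀ ij, p ij ∈ Set.Ioo (0 : ℝ) 1) (hq : ∀ ik, q ik ∈ Set.Ioo (0 : ℝ) 1)
    (α β γ : ℝ) (hα : α ∈ Set.Ioo (0 : ℝ) 1)
    (hβ : β ∈ Set.Ioo (0 : ℝ) 1) (hγ : γ ∈ Set.Ioo (0 : ℝ) 1)
    (hβγ : β + γ = 1)
    (δ : ℝ)
    (hδ : δ = (2 * γ + α * β - α * γ -
        Real.sqrt (α * (4 * β * γ + α * β ^ 2 + α * γ ^ 2 - 2 * α * β * γ))) /
      (2 * γ))
    (hLA : OmegaLA p q α β γ δ = (∅ : Set ((J → ℕ) × (K → ℕ)))) :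
    OmegaNL p q α = (∅ : Set ((J → ℕ) × (K → ℕ))) := by
  subst hδ
  exact Set.subset_eq_empty (la_infeasible_implies_infeasible_general
    (fun ij => Set.Ioo_subset_Ioc_self (hp ij)) (fun ik => Set.Ioo_subset_Ioc_self (hq ik))
    hα hβ.1 hγ.1) hLA
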